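/- arXiv:2605.26846 — 7 statements merged into one kernel-verified Lean document; each statement's English description precedes it below -/
import Mathlib

section
/- For every integer M ≥ 1 and every real x, ∑_{k=0}^{M} (−1)^{M−k} P_{2k}(2M, M+1/2) x^{2M−2k} = P_{2M}(2M, M+1/2) · ∏_{r=1}^{M} (1 + 4x²/(2r−1)²). (This is the real form of the identity ∑_{k=0}^{M} P_{2k}(2M, M+1/2)(ix)^{2M−2k} = P_{2M}(2M, M+1/2) ∏_{r=1}^{M}(1 + 4x²/(2r−1)²), using (ix)^{2M−2k} = (−1)^{M−k} x^{2M−2k}.) -/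
/-- Signed generalized Stirling polynomial `P_k(m,x) = (-1)^k e_k(1-x, 2-x, …, m-x)`,
with `P_k(m,x) = 0` for `k < 0` or `k > m`. -/
noncomputable def P (m : ℕ) (k : ℤ) (x : ℝ) : ℝ :=
  if 0 ≤ k then
    (-1 : ℝ) ^ k.toNat *
      ∑ S ∈ (Finset.range m).powersetCard k.toNat, ∏ i ∈ S, ((i : ℝ) + 1 - x)
  else 0

/-!
The shifts `i + 1 - (M + 1/2)`, `i < 2 * M`, come in pairs `±(r + 1/2)`, so the product
`∏ (X + (i + 1 - (M + 1/2)))` is `q(X²)` with `q = ∏ (X - (r + 1/2)²)`. By Vieta, the coefficients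
of `q` are therefore the numbers `P_{2k}(2M, M + 1/2)`; dividing `q(z)` by `q(0)` leaves the factors
`1 - 4z / (2r + 1)²`, and the substitution `z = -x²` gives the identity.
-/

open Polynomial

/-- The polynomial `∏_{r < M} (X - (r + h)²)`. For `h = 1/2` its roots are the squares of the first
`M` positive half-integers; `h` is kept as a parameter so that the definition makes sense over
every commutative ring. -/
noncomputable def shiftedSquaresPoly {R : Type*} [CommRing R] (h : R) (M : ℕ) : R[X] :=
  ∏ r ∈ Finset.range M, (X - C (((r : R) + h) ^ 2))

lemma natDegree_shiftedSquaresPoly_le {R : Type*} [CommRing R] (h : R) (M : ℕ) :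
    (shiftedSquaresPoly h M).natDegree ≤ M := by
  nontriviality R
  rw [shiftedSquaresPoly, natDegree_finsetProd_X_sub_C_eq_card, Finset.card_range]

/-- Reversing the order of the first `M` factors pairs the shift `-(r + h)` with
`r + 1 - h = r + h`. -/
lemma prod_X_add_C_eq_expand_shiftedSquaresPoly {R : Type*} [CommRing R] {h : R}
    (two_mul_h : 2 * h = 1) (M : ℕ) :
    ∏ i ∈ Finset.range (2 * M), (X + C ((i : R) + 1 - (M + h))) =
      expand R 2 (shiftedSquaresPoly h M) := by
  rw [shiftedSquaresPoly, map_prod, two_mul, Finset.prod_range_add, ← Finset.prod_range_reflect,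
    ← Finset.prod_mul_distrib]
  refine Finset.prod_congr rfl fun r hr ↦ ?_
  have lower_shift : ((M - 1 - r : ℕ) : R) + 1 - (M + h) = -(r + h) := by
    have : r + 1 ≤ M := Finset.mem_range.mp hr
    rw [Nat.sub_sub, add_comm 1 r, Nat.cast_sub this]
    push_cast
    ring
  have upper_shift : ((M + r : ℕ) : R) + 1 - (M + h) = r + h := by
    push_cast
    linear_combination -two_mul_h
  rw [lower_shift, upper_shift, map_sub, expand_X, expand_C, C_neg, C_pow]
  ring

lemma P_natCast_eq_coeff {m k : ℕ} (hk : k ≤ m) (x : ℝ) :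
    P m k x =
      (-1) ^ k * (∏ i ∈ Finset.range m, (X + C ((i : ℝ) + 1 - x))).coeff (m - k) := by
  rw [P, if_pos k.cast_nonneg, Int.toNat_natCast, Finset.prod_X_add_C_coeff _ _ (by simp),
    Finset.card_range, Nat.sub_sub_self hk]

lemma P_two_mul_eq_coeff_shiftedSquaresPoly {M k : ℕ} (hk : k ≤ M) :
    P (2 * M) (2 * k : ℕ) (M + 1 / 2) = (shiftedSquaresPoly (1 / 2 : ℝ) M).coeff (M - k) := by
  rw [P_natCast_eq_coeff (Nat.mul_le_mul_left 2 hk), (even_two_mul k).neg_one_pow, one_mul,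
    prod_X_add_C_eq_expand_shiftedSquaresPoly (by norm_num), ← Nat.mul_sub,
    coeff_expand_mul' two_pos]

lemma aeval_prod_X_sub_C_eq_coeff_zero_smul {ι K A : Type*} [Field K] [CommRing A] [Algebra K A]
    (s : Finset ι) {c : ι → K} (hc : ∀ i ∈ s, c i ≠ 0) (z : A) :
    aeval z (∏ i ∈ s, (X - C (c i))) =
      (∏ i ∈ s, (X - C (c i))).coeff 0 • ∏ i ∈ s, (1 - (c i)⁻¹ • z) := by
  rw [coeff_zero_prod, ← Finset.prod_smul, map_prod]
  refine Finset.prod_congr rfl fun i hi ↦ ?_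
  rw [map_sub, aeval_X, aeval_C, coeff_sub, coeff_X_zero, coeff_C_zero, zero_sub, smul_sub,
    neg_smul, neg_smul, smul_inv_smul₀ (hc i hi), Algebra.algebraMap_eq_smul_one]
  abel

lemma aeval_shiftedSquaresPoly_half {A : Type*} [CommRing A] [Algebra ℝ A] (M : ℕ) (z : A) :
    aeval z (shiftedSquaresPoly (1 / 2 : ℝ) M) =
      (shiftedSquaresPoly (1 / 2 : ℝ) M).coeff 0 •
        ∏ r ∈ Finset.range M, (1 - (4 / (2 * (r : ℝ) + 1) ^ 2) • z) := by
  have inv_sq_half (r : ℕ) : (((r : ℝ) + 1 / 2) ^ 2)⁻¹ = 4 / (2 * (r : ℝ) + 1) ^ 2 := by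
    field_simp
    norm_num
  simp only [shiftedSquaresPoly, ← inv_sq_half]
  exact aeval_prod_X_sub_C_eq_coeff_zero_smul _ (fun r _ ↦ by positivity) z

/-- The stated identity is the case `A = ℝ`, `z = -x ^ 2`; its complex form is `A = ℂ`,
`z = (i x) ^ 2`. -/
theorem finite_cosh_product_general {A : Type*} [CommRing A] [Algebra ℝ A] (M : ℕ) (z : A) :
    ∑ k ∈ Finset.range (M + 1), P (2 * M) (2 * k : ℕ) (M + 1 / 2) • z ^ (M - k) =
      P (2 * M) (2 * M : ℕ) (M + 1 / 2) •
        ∏ r ∈ Finset.range M, (1 - (4 / (2 * (r : ℝ) + 1) ^ 2) • z) := by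
  set q : ℝ[X] := shiftedSquaresPoly (1 / 2) M
  calc ∑ k ∈ Finset.range (M + 1), P (2 * M) (2 * k : ℕ) (M + 1 / 2) • z ^ (M - k)
    _ = ∑ k ∈ Finset.range (M + 1), q.coeff (M - k) • z ^ (M - k) :=
        Finset.sum_congr rfl fun k hk ↦ by
          rw [P_two_mul_eq_coeff_shiftedSquaresPoly (Finset.mem_range_succ_iff.mp hk)]
    _ = ∑ k ∈ Finset.range (M + 1), q.coeff k • z ^ k :=
        Finset.sum_range_reflect (fun k ↦ q.coeff k • z ^ k) (M + 1)
    _ = aeval z q :=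
        (aeval_eq_sum_range' (Nat.lt_succ_of_le (natDegree_shiftedSquaresPoly_le _ M)) z).symm
    _ = q.coeff 0 • ∏ r ∈ Finset.range M, (1 - (4 / (2 * (r : ℝ) + 1) ^ 2) • z) :=
        aeval_shiftedSquaresPoly_half M z
    _ = _ := by rw [P_two_mul_eq_coeff_shiftedSquaresPoly le_rfl, Nat.sub_self]

/-- Finite cosh product identity (real form). -/
theorem finite_cosh_product (M : ℕ) (hM : 1 ≤ M) (x : ℝ) :
    ∑ k ∈ Finset.range (M + 1),
        (-1 : ℝ) ^ (M - k) * P (2 * M) ((2 * k : ℕ) : ℤ) ((M : ℝ) + 1 / 2) * x ^ (2 * M - 2 * k)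
      = P (2 * M) ((2 * M : ℕ) : ℤ) ((M : ℝ) + 1 / 2) *
          ∏ r ∈ Finset.range M, (1 + 4 * x ^ 2 / (2 * (r : ℝ) + 1) ^ 2) := by
  have key := finite_cosh_product_general M (-x ^ 2)
  simp_rw [neg_pow (x ^ 2), ← pow_mul, Nat.mul_sub, smul_neg, smul_eq_mul] at key
  simpa only [sub_neg_eq_add, div_mul_eq_mul_div, mul_left_comm, mul_assoc] using key
end

section
/- For every fixed integer s ≥ 1, the sequence M ↦ (−1)^s · P_{2M−2s}(2M, M+1/2) / P_{2M}(2M, M+1/2) (defined for M ≥ s) converges to π^{2s}/(2s)! as M → ∞. In particular, −2·P_{2M−2}(2M, M+1/2)/P_{2M}(2M, M+1/2) converges to π² as M → ∞. -/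
open Filter

section Coefficients

open Polynomial

lemma tendsto_coeff_of_tendstoLocallyUniformlyOn {ι : Type*} {φ : Filter ι} {p : ι → ℂ[X]}
    {f : ℂ → ℂ} {U : Set ℂ} (hU : IsOpen U) (h0 : 0 ∈ U)
    (hp : TendstoLocallyUniformlyOn (fun i z => (p i).eval z) f φ U) (k : ℕ) :
    Tendsto (fun i => (p i).coeff k) φ (nhds (iteratedDeriv k f 0 / k.factorial)) := by
  induction k generalizing p f with
  | zero => simpa [coeff_zero_eq_eval_zero] using hp.tendsto_at h0
  | succ k ih =>
    have hderiv : TendstoLocallyUniformlyOn (fun i z => (derivative (p i)).eval z) (deriv f) φ U :=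
      (hp.deriv (Eventually.of_forall fun i => (p i).differentiableOn) hU).congr
        fun i z _ => (p i).deriv
    have hne : (k + 1 : ℂ) ≠ 0 := k.cast_add_one_ne_zero
    convert (ih hderiv).div_const (k + 1 : ℂ) using 2 with i
    · rw [coeff_derivative, mul_div_cancel_right₀ _ hne]
    · rw [iteratedDeriv_succ', Nat.factorial_succ, mul_comm, Nat.cast_mul, Nat.cast_succ, div_div]

end Coefficients

section CosineProduct

open Complex

lemma iteratedDeriv_even_cos_const_mul_zero (c : ℂ) (s : ℕ) :
    iteratedDeriv (2 * s) (fun z => cos (c * z)) 0 = (-1) ^ s * c ^ (2 * s) := by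
  rw [iteratedDeriv_comp_const_mul contDiff_cos, iteratedDeriv_even_cos]
  simp [mul_comm]

lemma natCast_add_half_ne_zero (j : ℕ) : (j : ℂ) + 1 / 2 ≠ 0 := by
  have hj : (j : ℝ) + 1 / 2 ≠ 0 := by positivity
  simpa using ofReal_ne_zero.2 hj

lemma Gamma_half_add_mul_Gamma_half_sub (z : ℂ) :
    Gamma (1 / 2 + z) * Gamma (1 / 2 - z) = Real.pi / cos (Real.pi * z) := by
  have hreflect := Gamma_mul_Gamma_one_sub (1 / 2 + z)
  rw [show 1 - (1 / 2 + z) = 1 / 2 - z by ring,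
    show (Real.pi : ℂ) * (1 / 2 + z) = Real.pi * z + Real.pi / 2 by ring, sin_add_pi_div_two]
    at hreflect
  exact hreflect

lemma prod_one_sub_sq_div_eq_GammaSeq (z : ℂ) {n : ℕ} (hn : n ≠ 0) :
    ∏ j ∈ Finset.range (n + 1), (1 - z ^ 2 / ((j : ℂ) + 1 / 2) ^ 2) =
      GammaSeq (1 / 2) n ^ 2 / (GammaSeq (1 / 2 + z) n * GammaSeq (1 / 2 - z) n) := by
  have hn' : (n : ℂ) ≠ 0 := Nat.cast_ne_zero.2 hn
  have hpow : (n : ℂ) ^ (1 / 2 + z) * (n : ℂ) ^ (1 / 2 - z) = ((n : ℂ) ^ (1 / 2 : ℂ)) ^ 2 := by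
    rw [sq, ← cpow_add _ _ hn', ← cpow_add _ _ hn']
    ring_nf
  have hfactor (j : ℕ) : 1 - z ^ 2 / ((j : ℂ) + 1 / 2) ^ 2 =
      (1 / 2 + z + j) * (1 / 2 - z + j) / (1 / 2 + j) ^ 2 := by
    rw [add_comm (1 / 2 : ℂ) j, one_sub_div (pow_ne_zero 2 (natCast_add_half_ne_zero j))]
    ring
  have hnum : ((n : ℂ) ^ (1 / 2 : ℂ) * n.factorial) ^ 2 ≠ 0 := by
    simp [hn', Nat.factorial_ne_zero]
  calc _ = (∏ j ∈ Finset.range (n + 1), (1 / 2 + z + j)) *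
        (∏ j ∈ Finset.range (n + 1), (1 / 2 - z + j)) /
          (∏ j ∈ Finset.range (n + 1), (1 / 2 + (j : ℂ))) ^ 2 := by
        rw [Finset.prod_congr rfl fun j _ => hfactor j, Finset.prod_div_distrib,
          Finset.prod_mul_distrib, Finset.prod_pow]
    _ = _ := by
        rw [GammaSeq, GammaSeq, GammaSeq, div_mul_div_comm, mul_mul_mul_comm, hpow, ← sq,
          ← mul_pow, div_pow, div_div_div_cancel_left' _ _ hnum]

lemma exists_sq_eq_of_cos_pi_mul_eq_zero {z : ℂ} (hz : cos (Real.pi * z) = 0) :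
    ∃ j : ℕ, z ^ 2 = ((j : ℂ) + 1 / 2) ^ 2 := by
  obtain ⟨k, hk⟩ := cos_eq_zero_iff.1 hz
  have hpi : (Real.pi : ℂ) ≠ 0 := ofReal_ne_zero.2 Real.pi_ne_zero
  have hzk : z = k + 1 / 2 := mul_left_cancel₀ hpi (hk.trans (by ring))
  rw [hzk]
  cases k with
  | ofNat n => exact ⟨n, by simp⟩
  | negSucc n => exact ⟨n, by push_cast; ring⟩

lemma tendsto_euler_cos_prod (z : ℂ) :
    Tendsto (fun n : ℕ => ∏ j ∈ Finset.range n, (1 - z ^ 2 / ((j : ℂ) + 1 / 2) ^ 2)) atTop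
      (nhds (cos (Real.pi * z))) := by
  by_cases hz : cos (Real.pi * z) = 0
  -- Here `1/2 + z` or `1/2 - z` is a pole of `Γ`, where Mathlib's `Gamma` is `0`; the product has a
  -- vanishing factor instead.
  · obtain ⟨j, hj⟩ := exists_sq_eq_of_cos_pi_mul_eq_zero hz
    rw [hz]
    refine tendsto_const_nhds.congr' ?_
    filter_upwards [eventually_gt_atTop j] with n hn
    refine (Finset.prod_eq_zero (Finset.mem_range.2 hn) ?_).symm
    rw [hj, div_self (pow_ne_zero 2 (natCast_add_half_ne_zero j)), sub_self]
  · have hpi : (Real.pi : ℂ) ≠ 0 := ofReal_ne_zero.2 Real.pi_ne_zero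
    have hreflect := Gamma_half_add_mul_Gamma_half_sub z
    have hhalf : Gamma (1 / 2) ^ 2 = Real.pi := by
      simpa [sq] using Gamma_half_add_mul_Gamma_half_sub 0
    have hlim := ((GammaSeq_tendsto_Gamma (1 / 2)).pow 2).div
      ((GammaSeq_tendsto_Gamma (1 / 2 + z)).mul (GammaSeq_tendsto_Gamma (1 / 2 - z)))
      (hreflect ▸ div_ne_zero hpi hz)
    rw [hhalf, hreflect, div_div_cancel₀ hpi] at hlim
    refine (tendsto_add_atTop_iff_nat 1).1 (hlim.congr' ?_)
    filter_upwards [eventually_ne_atTop 0] with n hn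
    exact (prod_one_sub_sq_div_eq_GammaSeq z hn).symm

lemma hasProdLocallyUniformlyOn_one_add_mul {ι X R : Type*} [NormedCommRing R] [NormOneClass R]
    [CompleteSpace R] [TopologicalSpace X] [LocallyCompactSpace X] {a : ι → R}
    (ha : Summable fun i => ‖a i‖) {g : X → R} (hg : Continuous g) :
    HasProdLocallyUniformlyOn (fun i x => 1 + a i * g x) (fun x => ∏' i, (1 + a i * g x))
      Set.univ := by
  refine hasProdLocallyUniformlyOn_of_forall_compact isOpen_univ fun K _ hK => ?_
  obtain ⟨B, hB⟩ := hK.exists_bound_of_continuousOn hg.continuousOn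
  refine Summable.hasProdUniformlyOn_one_add hK (ha.mul_right B)
    (Eventually.of_forall fun i x hx => ?_) fun i => (continuous_const.mul hg).continuousOn
  exact (norm_mul_le _ _).trans (mul_le_mul_of_nonneg_left (hB x hx) (norm_nonneg _))

lemma summable_norm_one_div_natCast_add_half_sq :
    Summable fun j : ℕ => ‖1 / ((j : ℂ) + 1 / 2) ^ 2‖ := by
  have hreal : Summable fun j : ℕ => 1 / ((j : ℝ) + 1 / 2) ^ 2 := by
    simpa only [Real.rpow_two, sq_abs] using
      (Real.summable_one_div_nat_add_rpow (1 / 2) 2).2 one_lt_two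
  convert hreal.norm using 2 with j
  rw [← norm_real]
  push_cast
  rfl

lemma tendstoLocallyUniformlyOn_euler_cos_prod :
    TendstoLocallyUniformlyOn
      (fun (n : ℕ) (z : ℂ) => ∏ j ∈ Finset.range n, (1 - z ^ 2 / ((j : ℂ) + 1 / 2) ^ 2))
      (fun z => cos (Real.pi * z)) atTop Set.univ := by
  have hprod := (hasProdLocallyUniformlyOn_one_add_mul
    summable_norm_one_div_natCast_add_half_sq
    (g := fun z : ℂ => -z ^ 2) (by fun_prop)).tendstoLocallyUniformlyOn_finsetRange
  simp only [mul_neg, ← sub_eq_add_neg, one_div_mul_eq_div] at hprod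
  exact hprod.congr_right fun z hz =>
    tendsto_nhds_unique (hprod.tendsto_at hz) (tendsto_euler_cos_prod z)

end CosineProduct

section Stirling

open Polynomial

/-- The generating polynomial `∏_{i=1}^m (y + i - x)` of the numbers `P_k(m, x)`, in the
indeterminate `y`; the product runs over `i - 1`. -/
noncomputable def P.genPoly (m : ℕ) (x : ℝ) : ℝ[X] :=
  ∏ i ∈ Finset.range m, (X + C ((i : ℝ) + 1 - x))

/-- The generating polynomial with `m = 2M` factors at `x = M + 1/2`, the midpoint of
`1, …, 2M`, where its roots are symmetric about `0`. -/
noncomputable def P.centralPoly (M : ℕ) : ℝ[X] :=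
  P.genPoly (2 * M) ((M : ℝ) + 1 / 2)

lemma prod_range_two_mul_add_sub_half {K : Type*} [Field K] [NeZero (2 : K)] (M : ℕ) (z : K) :
    ∏ i ∈ Finset.range (2 * M), (z + ((i : K) + 1 - ((M : K) + 1 / 2))) =
      ∏ j ∈ Finset.range M, (z ^ 2 - ((j : K) + 1 / 2) ^ 2) := by
  rw [two_mul, Finset.prod_range_add, ← Finset.prod_range_reflect, ← Finset.prod_mul_distrib]
  refine Finset.prod_congr rfl fun j hj => ?_
  have hreflect : ((M - 1 - j : ℕ) : K) = M - 1 - j := by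
    have hj' := Finset.mem_range.1 hj
    rw [Nat.cast_sub (by omega), Nat.cast_sub (by omega), Nat.cast_one]
  rw [hreflect, Nat.cast_add]
  field_simp
  ring

namespace P

lemma natCast_sub_eq_coeff_genPoly {m k : ℕ} (hk : k ≤ m) (x : ℝ) :
    P m ((m - k : ℕ) : ℤ) x = (-1) ^ (m - k) * (genPoly m x).coeff k := by
  rw [genPoly, Finset.prod_X_add_C_coeff _ _ (by simpa using hk), P, if_pos (Int.natCast_nonneg _),
    Int.toNat_natCast, Finset.card_range]

lemma two_mul_sub_two_mul_eq_coeff_centralPoly {M s : ℕ} (hs : s ≤ M) :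
    P (2 * M) ((2 * M - 2 * s : ℕ) : ℤ) ((M : ℝ) + 1 / 2) = (centralPoly M).coeff (2 * s) := by
  have heven : Even (2 * M - 2 * s) := Nat.mul_sub 2 M s ▸ even_two_mul (M - s)
  rw [natCast_sub_eq_coeff_genPoly (Nat.mul_le_mul_left 2 hs), heven.neg_one_pow, one_mul,
    centralPoly]

lemma eval_map_centralPoly (M : ℕ) (z : ℂ) :
    ((centralPoly M).map Complex.ofRealHom).eval z =
      ∏ j ∈ Finset.range M, (z ^ 2 - ((j : ℂ) + 1 / 2) ^ 2) := by
  rw [← prod_range_two_mul_add_sub_half, centralPoly, genPoly, Polynomial.map_prod, eval_prod]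
  simp

lemma coeff_zero_centralPoly (M : ℕ) :
    (((centralPoly M).coeff 0 : ℝ) : ℂ) = ∏ j ∈ Finset.range M, -((j : ℂ) + 1 / 2) ^ 2 := by
  simpa [← coeff_zero_eq_eval_zero] using eval_map_centralPoly M 0

lemma eval_map_centralPoly_div_coeff_zero (M : ℕ) (z : ℂ) :
    ((centralPoly M).map Complex.ofRealHom).eval z / (centralPoly M).coeff 0 =
      ∏ j ∈ Finset.range M, (1 - z ^ 2 / ((j : ℂ) + 1 / 2) ^ 2) := by
  rw [eval_map_centralPoly, coeff_zero_centralPoly, ← Finset.prod_div_distrib]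
  refine Finset.prod_congr rfl fun j _ => ?_
  rw [div_neg, ← neg_div, neg_sub, sub_div, div_self (pow_ne_zero 2 (natCast_add_half_ne_zero j))]

lemma tendsto_coeff_centralPoly_div_coeff_zero (s : ℕ) :
    Tendsto (fun M => (centralPoly M).coeff (2 * s) / (centralPoly M).coeff 0) atTop
      (nhds ((-1) ^ s * Real.pi ^ (2 * s) / (2 * s).factorial)) := by
  let q (M : ℕ) : ℂ[X] :=
    (centralPoly M).map Complex.ofRealHom * C ((centralPoly M).coeff 0 : ℂ)⁻¹
  have hq : TendstoLocallyUniformlyOn (fun M z => (q M).eval z)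
      (fun z => Complex.cos (Real.pi * z)) atTop Set.univ :=
    tendstoLocallyUniformlyOn_euler_cos_prod.congr fun M z _ => by
      simp only [q, eval_mul, eval_C]
      rw [← div_eq_mul_inv, eval_map_centralPoly_div_coeff_zero]
  have hcoeff := tendsto_coeff_of_tendstoLocallyUniformlyOn isOpen_univ (Set.mem_univ 0) hq (2 * s)
  rw [iteratedDeriv_even_cos_const_mul_zero] at hcoeff
  rw [← tendsto_ofReal_iff]
  simpa [q, div_eq_mul_inv] using hcoeff

lemma tendsto_two_mul_sub_two_mul_div_two_mul (s : ℕ) :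
    Tendsto (fun M : ℕ => P (2 * M) ((2 * M - 2 * s : ℕ) : ℤ) ((M : ℝ) + 1 / 2) /
        P (2 * M) ((2 * M : ℕ) : ℤ) ((M : ℝ) + 1 / 2))
      atTop (nhds ((-1) ^ s * Real.pi ^ (2 * s) / (2 * s).factorial)) := by
  refine (tendsto_coeff_centralPoly_div_coeff_zero s).congr' ?_
  filter_upwards [eventually_ge_atTop s] with M hM
  have hden := two_mul_sub_two_mul_eq_coeff_centralPoly (Nat.zero_le M)
  rw [mul_zero, Nat.sub_zero] at hden
  rw [two_mul_sub_two_mul_eq_coeff_centralPoly hM, hden]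

end P

end Stirling

/-- Coefficient limits: `(-1)^s P_{2M-2s}(2M,M+1/2)/P_{2M}(2M,M+1/2) → π^{2s}/(2s)!`,
and in particular `-2 P_{2M-2}(2M,M+1/2)/P_{2M}(2M,M+1/2) → π²`. -/
theorem pi_polynomial_limit (s : ℕ) (hs : 1 ≤ s) :
    Tendsto (fun M : ℕ =>
        (-1 : ℝ) ^ s * P (2 * M) ((2 * M - 2 * s : ℕ) : ℤ) ((M : ℝ) + 1 / 2)
          / P (2 * M) ((2 * M : ℕ) : ℤ) ((M : ℝ) + 1 / 2))
      atTop (nhds (Real.pi ^ (2 * s) / (Nat.factorial (2 * s) : ℝ)))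
    ∧ Tendsto (fun M : ℕ =>
        -2 * P (2 * M) ((2 * M - 2 : ℕ) : ℤ) ((M : ℝ) + 1 / 2)
          / P (2 * M) ((2 * M : ℕ) : ℤ) ((M : ℝ) + 1 / 2))
      atTop (nhds (Real.pi ^ 2)) := by
  have hsign : (-1 : ℝ) ^ s * (-1) ^ s = 1 := by rw [← mul_pow, neg_one_mul, neg_neg, one_pow]
  constructor
  · convert (P.tendsto_two_mul_sub_two_mul_div_two_mul s).const_mul ((-1) ^ s) using 2
    · rw [mul_div_assoc]
    · rw [mul_div_assoc, ← mul_assoc, hsign, one_mul]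
  · convert (P.tendsto_two_mul_sub_two_mul_div_two_mul 1).const_mul (-2) using 2
    · rw [mul_one, mul_div_assoc]
    · norm_num [Nat.factorial]
      ring
end

section
/- For every integer n ≥ 1 and every odd integer h with 1 ≤ h ≤ n−1, the following identity of integers holds: ∑_{r=0}^{h} (−1)^r · 2^{h−r} · n^r · C(n+r−h−1, n−h−1) · ⟦n, n−h+r⟧ = 0, where C(·,·) denotes the binomial coefficient. -/
/-!
Let `Q(x) = (x+1)⋯(x+n-1)`, so that `⟦n, k+1⟧` is the coefficient of `x ^ k` in `Q`. The roots of
`Q` are symmetric about `-n/2`. Doubling them keeps the coefficients integral: the monic polynomial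
with roots `-2, -4, …, -2(n-1)` is symmetric about `-n`, so recentring it at `-n` gives a polynomial
with the parity of `n - 1`. The sum is its coefficient of `x ^ (n-1-h)`, which vanishes because `h`
is odd.
-/

/-- Stirling cycle number (unsigned Stirling number of the first kind):
the coefficient of `x^k` in `x(x+1)⋯(x+n-1)`. -/
noncomputable def stirlingCycle (n k : ℕ) : ℕ := (ascPochhammer ℕ n).coeff k

open Polynomial nonZeroDivisors

section Reflection

variable {R : Type*} [CommRing R]

lemma coeff_eq_zero_of_comp_neg_X (h2 : (2 : R) ∈ R⁰) {p : R[X]} {n m : ℕ}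
    (hp : p.comp (-X) = (-1) ^ n * p) (hnm : Odd (n + m)) : p.coeff m = 0 := by
  have hcoeff : p.coeff m * (-1) ^ m = (-1) ^ n * p.coeff m := by
    rw [← comp_C_mul_X_coeff, ← coeff_C_mul, C_neg, C_1, neg_one_mul, hp, C_pow, C_neg, C_1]
  have hsq : ((-1 : R) ^ m) * (-1) ^ m = 1 := by rw [← mul_pow]; simp
  have hsign : (-1 : R) ^ n * (-1) ^ m = -1 := by rw [← pow_add, hnm.neg_one_pow]
  have hdouble : p.coeff m * 2 = 0 := by
    linear_combination (-1) ^ m * hcoeff - p.coeff m * hsq + p.coeff m * hsign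
  exact (mul_right_mem_nonZeroDivisors_eq_zero_iff h2).mp hdouble

lemma scaleRoots_comp_neg_X_sub_C {p : R[X]} {c s : R} {n : ℕ} (hs : s ∈ R⁰)
    (hp : p.comp (-X - C c) = (-1) ^ n * p) :
    (p.scaleRoots s).comp (-X - C (s * c)) = (-1) ^ n * p.scaleRoots s := by
  have hscale (q : R[X]) : (p.scaleRoots s).comp (C s * q) = C s ^ p.natDegree * p.comp q := by
    rw [comp, scaleRoots_eval₂_mul, comp]
  rw [← sub_eq_zero, ← comp_C_mul_X_eq_zero_iff hs, sub_comp, sub_eq_zero]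
  calc ((p.scaleRoots s).comp (-X - C (s * c))).comp (C s * X)
      = (p.scaleRoots s).comp (C s * (-X - C c)) := by
        rw [comp_assoc]
        congr 1
        simp only [C_mul, sub_comp, neg_comp, mul_comp, X_comp, C_comp]
        ring
    _ = (-1) ^ n * (C s ^ p.natDegree * p.comp X) := by rw [hscale, hp, comp_X]; ring
    _ = ((-1) ^ n * p.scaleRoots s).comp (C s * X) := by rw [← hscale]; simp

lemma taylor_neg_comp_neg_X {p : R[X]} {c : R} {n : ℕ}
    (hp : p.comp (-X - C (2 * c)) = (-1) ^ n * p) :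
    (taylor (-c) p).comp (-X) = (-1) ^ n * taylor (-c) p := by
  calc (taylor (-c) p).comp (-X)
      = (p.comp (-X - C (2 * c))).comp (X + C (-c)) := by
        rw [taylor_apply, comp_assoc, comp_assoc]
        congr 1
        simp only [two_mul, C_add, C_neg, add_comp, sub_comp, neg_comp, X_comp, C_comp]
        ring
    _ = (-1) ^ n * taylor (-c) p := by rw [hp, taylor_apply]; simp

end Reflection

lemma coeff_taylor_scaleRoots {R : Type*} [CommSemiring R] {p : R[X]} {m h : ℕ}
    (hdeg : p.natDegree = m + h) (a s : R) :
    (taylor a (p.scaleRoots s)).coeff m =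
      ∑ r ∈ Finset.range (h + 1),
        a ^ r * s ^ (h - r) * ((m + r).choose m : R) * p.coeff (m + r) := by
  have hlt : (hasseDeriv m (p.scaleRoots s)).natDegree < h + 1 := by
    have := natDegree_hasseDeriv_le (p.scaleRoots s) m
    rw [natDegree_scaleRoots] at this
    lia
  rw [taylor_coeff, eval_eq_sum_range' hlt]
  refine Finset.sum_congr rfl fun r _ ↦ ?_
  rw [hasseDeriv_coeff, coeff_scaleRoots, hdeg, add_comm r m, Nat.add_sub_add_left]
  ring

lemma sum_choose_mul_coeff_eq_zero_of_comp_neg_X_sub_C {R : Type*} [CommRing R]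
    (h2 : (2 : R) ∈ R⁰) {p : R[X]} {c : R} {m h : ℕ} (hdeg : p.natDegree = m + h) (hodd : Odd h)
    (hp : p.comp (-X - C c) = (-1) ^ (m + h) * p) :
    ∑ r ∈ Finset.range (h + 1),
      (-1) ^ r * 2 ^ (h - r) * c ^ r * ((m + r).choose m : R) * p.coeff (m + r) = 0 := by
  have hparity := taylor_neg_comp_neg_X (scaleRoots_comp_neg_X_sub_C h2 hp)
  have hmh : Odd (m + h + m) := by grind
  rw [← coeff_eq_zero_of_comp_neg_X h2 hparity hmh, coeff_taylor_scaleRoots hdeg]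
  refine Finset.sum_congr rfl fun r _ ↦ ?_
  rw [neg_pow c]
  ring

lemma ascPochhammer_eval_neg_sub_natCast {R : Type*} [CommRing R] (n : ℕ) (x : R) :
    (ascPochhammer R n).eval (-x - n) = (-1) ^ n * (ascPochhammer R n).eval (x + 1) := by
  rw [← neg_add', ascPochhammer_eval_neg_eq_descPochhammer, descPochhammer_eval_eq_ascPochhammer,
    add_sub_cancel_right]

lemma ascPochhammer_comp_X_add_one_comp_neg_X_sub_C {R : Type*} [CommRing R] (n : ℕ) :
    ((ascPochhammer R n).comp (X + 1)).comp (-X - C (n + 1 : R)) =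
      (-1) ^ n * (ascPochhammer R n).comp (X + 1) := by
  have hcomp (q : R[X]) : (ascPochhammer R n).comp q = (ascPochhammer R[X] n).eval q :=
    (ascPochhammer_eval₂ C n q).symm
  rw [comp_assoc, hcomp, hcomp, ← ascPochhammer_eval_neg_sub_natCast]
  congr 1
  simp only [C_add, C_1, map_natCast, add_comp, X_comp, one_comp]
  ring

lemma natDegree_ascPochhammer_comp_X_add_one {R : Type*} [Semiring R] [NoZeroDivisors R]
    [Nontrivial R] (n : ℕ) : ((ascPochhammer R n).comp (X + 1)).natDegree = n := by
  rw [natDegree_comp, ascPochhammer_natDegree, ← C_1, natDegree_X_add_C, mul_one]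

lemma coeff_ascPochhammer_comp_X_add_one {R : Type*} [Semiring R] (n k : ℕ) :
    ((ascPochhammer R n).comp (X + 1)).coeff k = stirlingCycle (n + 1) (k + 1) := by
  rw [← coeff_X_mul, ← ascPochhammer_succ_left, ← ascPochhammer_map (Nat.castRingHom R), coeff_map,
    eq_natCast, stirlingCycle]

/-- Cancellation identity for Stirling cycle numbers: for `n ≥ 1` and odd `1 ≤ h ≤ n-1`,
`∑_{r=0}^h (-1)^r 2^{h-r} n^r C(n+r-h-1, n-h-1) ⟦n, n-h+r⟧ = 0`. -/
theorem central_cycle_band (n : ℕ) (hn : 1 ≤ n) (h : ℕ) (h1 : 1 ≤ h) (hh : h ≤ n - 1)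
    (hodd : Odd h) :
    ∑ r ∈ Finset.range (h + 1),
        (-1 : ℤ) ^ r * 2 ^ (h - r) * (n : ℤ) ^ r *
          ((n + r - h - 1).choose (n - h - 1) : ℤ) * (stirlingCycle n (n - h + r) : ℤ)
      = 0 := by
  obtain ⟨m, rfl⟩ : ∃ m, n = m + h + 1 := ⟨n - 1 - h, by lia⟩
  have h2 : (2 : ℤ) ∈ ℤ⁰ := mem_nonZeroDivisors_of_ne_zero two_ne_zero
  rw [← sum_choose_mul_coeff_eq_zero_of_comp_neg_X_sub_C h2
    (natDegree_ascPochhammer_comp_X_add_one (m + h)) hodd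
    (ascPochhammer_comp_X_add_one_comp_neg_X_sub_C (m + h))]
  refine Finset.sum_congr rfl fun r _ ↦ ?_
  rw [coeff_ascPochhammer_comp_X_add_one, ← Nat.cast_add_one,
    show m + h + 1 + r - h - 1 = m + r by lia, show m + h + 1 - h - 1 = m by lia,
    show m + h + 1 - h + r = m + r + 1 by lia]
end

section
/- For every integer M ≥ 1 and every integer s with 0 ≤ s ≤ M, the following identity of integers holds: ∑_{r=0}^{M−s} (−1)^{r−M+s} · (M+1)^r · C(r+s, s) · ⟦M+1, r+s+1⟧ = ⟦M+1, s+1⟧, where C(·,·) denotes the binomial coefficient. -/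
open Polynomial

section Polynomial

variable {R : Type*}

lemma coeff_taylor_eq_sum_range [Semiring R] (a : R) (p : R[X]) (s : ℕ) :
    (taylor a p).coeff s = ∑ r ∈ Finset.range (p.natDegree - s + 1),
      ((r + s).choose s : R) * p.coeff (r + s) * a ^ r := by
  have hdeg : (hasseDeriv s p).natDegree < p.natDegree - s + 1 :=
    Nat.lt_succ_of_le (natDegree_hasseDeriv_le p s)
  simp only [taylor_coeff, eval_eq_sum_range' hdeg, hasseDeriv_coeff]

lemma coeff_comp_neg_X [Ring R] (p : R[X]) (k : ℕ) :
    (p.comp (-X)).coeff k = (-1) ^ k * p.coeff k := by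
  have hneg : (-X : R[X]) = C (-1) * X := by simp
  rw [hneg, comp_C_mul_X_coeff, ((Commute.neg_one_left (p.coeff k)).pow_left k).eq]

lemma ascPochhammer_comp_eq_eval [Semiring R] (n : ℕ) (p : R[X]) :
    (ascPochhammer R n).comp p = (ascPochhammer R[X] n).eval p :=
  (ascPochhammer_eval₂ C n p).symm

lemma ascPochhammer_eval_one_sub [Ring R] (n : ℕ) (x : R) :
    (ascPochhammer R n).eval (1 - x) = (-1) ^ n * (ascPochhammer R n).eval (x - n) := by
  rw [← neg_sub x 1, ascPochhammer_eval_neg_eq_descPochhammer,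
    descPochhammer_eval_eq_ascPochhammer, sub_right_comm, sub_add_cancel]

lemma taylor_one_ascPochhammer_comp_neg_X [CommRing R] (n : ℕ) :
    (taylor 1 (ascPochhammer R n)).comp (-X) =
      (-1) ^ n * taylor (-n : R) (ascPochhammer R n) := by
  have hleft : (X + C 1 : R[X]).comp (-X) = 1 - X := by simp [neg_add_eq_sub]
  have hright : X + C (-n : R) = X - (n : R[X]) := by simp [sub_eq_add_neg]
  rw [taylor_apply, comp_assoc, hleft, taylor_apply, hright, ascPochhammer_comp_eq_eval,
    ascPochhammer_comp_eq_eval, ascPochhammer_eval_one_sub]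

end Polynomial

lemma natCast_stirlingCycle_succ_succ (R : Type*) [Semiring R] (n k : ℕ) :
    (stirlingCycle (n + 1) (k + 1) : R) = (taylor 1 (ascPochhammer R n)).coeff k := by
  have hcast : (stirlingCycle (n + 1) (k + 1) : R) = (ascPochhammer R (n + 1)).coeff (k + 1) := by
    rw [← ascPochhammer_map (Nat.castRingHom R), coeff_map, stirlingCycle, eq_natCast]
  rw [hcast, ascPochhammer_succ_left, coeff_X_mul, taylor_apply, C_1]

/-- Weighted binomial transform of Stirling cycle numbers: for `M ≥ 1` and `0 ≤ s ≤ M`,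
`∑_{r=0}^{M-s} (-1)^{r-M+s} (M+1)^r C(r+s,s) ⟦M+1, r+s+1⟧ = ⟦M+1, s+1⟧`
(the sign `(-1)^{r-M+s}` is written as `(-1)^{r+s+M}`, which is equal). -/
theorem integer_shift_cycle (M : ℕ) (hM : 1 ≤ M) (s : ℕ) (hs : s ≤ M) :
    ∑ r ∈ Finset.range (M - s + 1),
        (-1 : ℤ) ^ (r + s + M) * ((M : ℤ) + 1) ^ r * ((r + s).choose s : ℤ) *
          (stirlingCycle (M + 1) (r + s + 1) : ℤ)
      = (stirlingCycle (M + 1) (s + 1) : ℤ) := by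
  set P : ℤ[X] := taylor 1 (ascPochhammer ℤ M) with hP
  have hdeg : P.natDegree = M := by rw [hP, natDegree_taylor, ascPochhammer_natDegree]
  have hreflect : P.comp (-X) = C ((-1) ^ M) * taylor (-(M + 1) : ℤ) P := by
    simp [hP, taylor_taylor, taylor_one_ascPochhammer_comp_neg_X]
  simp only [natCast_stirlingCycle_succ_succ, ← hP]
  calc _ = (-1) ^ s * ((-1) ^ M * (taylor (-(M + 1) : ℤ) P).coeff s) := by
        rw [coeff_taylor_eq_sum_range, hdeg, Finset.mul_sum, Finset.mul_sum]
        refine Finset.sum_congr rfl fun r _ => ?_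
        rw [neg_pow ((M : ℤ) + 1)]
        ring
    _ = (-1) ^ s * (P.comp (-X)).coeff s := by rw [hreflect, coeff_C_mul]
    _ = P.coeff s := by
        rw [coeff_comp_neg_X, ← mul_assoc, pow_mul_pow_eq_one s (by norm_num), one_mul]
end

section
/- For all integers N ≥ 1 and 1 ≤ j ≤ N, let c_j be the number of weakly increasing N-tuples (k₁,…,k_N) of natural numbers such that k₁ = j, k_i ≥ i for every i with 1 ≤ i ≤ N, and k_N ≤ N. Then N · c_j = j · C(2N−j−1, N−1), where C(·,·) denotes the binomial coefficient. -/
/-!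
Subtracting a tuple from `N` entrywise turns it into a partition inside the staircase
`(N - 1, …, 1, 0)` whose largest part is `N - j`; deleting that part leaves an arbitrary partition
inside `(N - 2, …, 1, 0)` with parts at most `N - j`. Sorting partitions inside `(n - 1, …, 1, 0)`
with parts at most `d` by whether `d` occurs gives Pascal's recursion away from the diagonal
`d = n`, and the symmetry of the binomial coefficients takes care of the diagonal, so their number
is the ballot number `C(n + d, n) - C(n + d, n + 1) = (n + 1 - d) / (n + 1) * C(n + d, n)`.
-/

open Finset

open scoped Classical in
/-- The partitions with parts at most `m` whose Young diagram lies in the diagram with row lengths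
`u`. A partition with at most `n` parts is encoded as the weakly decreasing function on `Fin n`
listing its parts, padded by zeros. -/
noncomputable def boundedPartitions {n : ℕ} (u : Fin n → ℕ) (m : ℕ) : Finset (Fin n → ℕ) :=
  {g ∈ Iic (u ⊓ fun _ => m) | Antitone g}

/-- The row lengths `(n - 1, …, 1, 0)` of the staircase diagram. -/
def staircase (n : ℕ) : Fin n → ℕ := fun i => i.rev

theorem antitone_cons_iff {α : Type*} [Preorder α] {n : ℕ} {a : α} {f : Fin n → α} :
    Antitone (Fin.cons a f : Fin (n + 1) → α) ↔ (∀ i, f i ≤ a) ∧ Antitone f := by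
  simpa only [antitone_iff_forall_lt] using! Fin.liftFun_cons (α := α) (· ≥ ·)

section BoundedPartitions

variable {n m k : ℕ}

theorem mem_boundedPartitions {u g : Fin n → ℕ} :
    g ∈ boundedPartitions u m ↔ Antitone g ∧ (∀ i, g i ≤ u i) ∧ ∀ i, g i ≤ m := by
  simp only [boundedPartitions, mem_filter, mem_Iic, le_inf_iff, Pi.le_def, and_comm]

theorem boundedPartitions_succ_of_le {u : Fin n → ℕ} (hu : ∀ i, u i ≤ m) :
    boundedPartitions u (m + 1) = boundedPartitions u m := by
  ext g
  simp only [mem_boundedPartitions]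
  grind

theorem card_boundedPartitions_zero_right (u : Fin n → ℕ) : #(boundedPartitions u 0) = 1 := by
  refine card_eq_one.2 ⟨0, ext fun g => ?_⟩
  simp only [mem_boundedPartitions, Nat.le_zero, mem_singleton, funext_iff, Pi.zero_apply]
  refine ⟨fun hg => hg.2.2, fun hg => ⟨fun i j _ => ?_, fun i => ?_, hg⟩⟩ <;> simp [hg]

theorem cons_mem_boundedPartitions {u : Fin (n + 1) → ℕ} {g : Fin n → ℕ} :
    Fin.cons k g ∈ boundedPartitions u m ↔
      k ≤ u 0 ∧ k ≤ m ∧ g ∈ boundedPartitions (Fin.tail u) k := by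
  simp only [mem_boundedPartitions, antitone_cons_iff, Fin.forall_fin_succ, Fin.cons_zero,
    Fin.cons_succ, Fin.tail]
  grind

theorem card_boundedPartitions_filter_head_eq {u : Fin (n + 1) → ℕ} (hu : k ≤ u 0) (hm : k ≤ m) :
    #{g ∈ boundedPartitions u m | g 0 = k} = #(boundedPartitions (Fin.tail u) k) := by
  have image_cons : {g ∈ boundedPartitions u m | g 0 = k} =
      (boundedPartitions (Fin.tail u) k).image (Fin.cons k) := by
    ext g
    induction g using Fin.consCases with
    | _ a g =>
      simp only [mem_filter, cons_mem_boundedPartitions, Fin.cons_zero, mem_image, Fin.cons_inj]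
      grind
  rw [image_cons, card_image_of_injective _ (Fin.cons_right_injective (α := fun _ => ℕ) k)]

theorem boundedPartitions_filter_head_ne (u : Fin (n + 1) → ℕ) (m : ℕ) :
    {g ∈ boundedPartitions u (m + 1) | g 0 ≠ m + 1} = boundedPartitions u m := by
  ext g
  simp only [mem_filter, mem_boundedPartitions]
  constructor
  · rintro ⟨⟨hg, hgu, hgm⟩, hg0⟩
    have largest_le : g 0 ≤ m := Nat.le_of_lt_succ ((hgm 0).lt_of_ne hg0)
    exact ⟨hg, hgu, fun i => (hg (Fin.zero_le i)).trans largest_le⟩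
  · rintro ⟨hg, hgu, hgm⟩
    exact ⟨⟨hg, hgu, fun i => (hgm i).trans m.le_succ⟩, ((hgm 0).trans_lt m.lt_succ_self).ne⟩

theorem card_boundedPartitions_succ {u : Fin (n + 1) → ℕ} (hu : m + 1 ≤ u 0) :
    #(boundedPartitions u (m + 1)) =
      #(boundedPartitions u m) + #(boundedPartitions (Fin.tail u) (m + 1)) := by
  rw [add_comm #(boundedPartitions u m), ← card_boundedPartitions_filter_head_eq hu le_rfl,
    ← boundedPartitions_filter_head_ne u m, card_filter_add_card_filter_not]

open scoped Classical in
theorem card_monotone_ge_head_eq (u : Fin (n + 1) → ℕ) (hk : k ≤ m) :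
    #{f : Fin (n + 1) → Fin (m + 1) |
        Monotone f ∧ (f 0 : ℕ) = m - k ∧ ∀ i, m - u i ≤ (f i : ℕ)} =
      #{g ∈ boundedPartitions u m | g 0 = k} := by
  -- Where `u i > m`, truncation makes the bound `m - u i` vacuous, as is the bound `u i` on `g i`.
  refine card_nbij' (fun f i => m - f i) (fun g i => ⟨m - g i, by omega⟩) ?_ ?_ ?_ ?_
  · intro f hf
    simp only [coe_filter, mem_univ, true_and, Set.mem_ofPred_eq, mem_boundedPartitions] at hf ⊢
    obtain ⟨hmono, hzero, hlower⟩ := hf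
    exact ⟨⟨fun a b hab => Nat.sub_le_sub_left (hmono hab) m,
      fun i => tsub_le_iff_tsub_le.1 (hlower i), fun i => Nat.sub_le m _⟩, by omega⟩
  · intro g hg
    simp only [coe_filter, mem_univ, true_and, Set.mem_ofPred_eq, mem_boundedPartitions] at hg ⊢
    obtain ⟨⟨hanti, hupper, -⟩, hzero⟩ := hg
    exact ⟨fun a b hab => Nat.sub_le_sub_left (hanti hab) m, by rw [hzero],
      fun i => Nat.sub_le_sub_left (hupper i) m⟩
  · intro f _
    ext i
    exact Nat.sub_sub_self (Nat.le_of_lt_succ (f i).isLt)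
  · intro g hg
    ext i
    exact Nat.sub_sub_self ((mem_boundedPartitions.1 (mem_filter.1 hg).1).2.2 i)

end BoundedPartitions

section Staircase

theorem staircase_succ_zero (n : ℕ) : staircase (n + 1) 0 = n := by
  simp [staircase]

theorem staircase_lt {n : ℕ} (i : Fin n) : staircase n i < n :=
  i.rev.isLt

theorem tail_staircase (n : ℕ) : Fin.tail (staircase (n + 1)) = staircase n := by
  ext i
  simp [Fin.tail, staircase]

theorem card_boundedPartitions_staircase_succ {n d : ℕ} (hd : d < n) :
    #(boundedPartitions (staircase (n + 1)) (d + 1)) =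
      #(boundedPartitions (staircase (n + 1)) d) + #(boundedPartitions (staircase n) (d + 1)) := by
  rw [card_boundedPartitions_succ (by rwa [staircase_succ_zero]), tail_staircase]

theorem boundedPartitions_staircase_self (n : ℕ) :
    boundedPartitions (staircase (n + 1)) (n + 1) = boundedPartitions (staircase (n + 1)) n :=
  boundedPartitions_succ_of_le fun i => Nat.le_of_lt_succ (staircase_lt i)

theorem card_boundedPartitions_staircase_add_choose {n d : ℕ} (hd : d ≤ n) :
    #(boundedPartitions (staircase n) d) + (n + d).choose (n + 1) = (n + d).choose n := by
  induction n generalizing d with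
  | zero =>
    obtain rfl : d = 0 := Nat.le_zero.1 hd
    simp [card_boundedPartitions_zero_right]
  | succ n ih_rows =>
    induction d with
    | zero => simp [card_boundedPartitions_zero_right]
    | succ d ih_parts =>
      have smaller_parts := ih_parts (Nat.le_of_succ_le hd)
      have pascal := Nat.choose_succ_succ' (n + 1 + d) n
      have pascal_succ := Nat.choose_succ_succ' (n + 1 + d) (n + 1)
      rw [← add_assoc (n + 1)]
      rcases (Nat.le_of_succ_le_succ hd).lt_or_eq with hdn | rfl
      · have fewer_rows := ih_rows (d := d + 1) hdn
        rw [← Nat.add_assoc, Nat.add_right_comm] at fewer_rows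
        rw [card_boundedPartitions_staircase_succ hdn]
        omega
      · have symmetry : (d + 1 + d).choose d = (d + 1 + d).choose (d + 1) :=
          Nat.choose_symm_of_eq_add (Nat.add_comm _ _)
        rw [boundedPartitions_staircase_self]
        omega

theorem succ_mul_card_boundedPartitions_staircase {n d : ℕ} (hd : d ≤ n) :
    (n + 1) * #(boundedPartitions (staircase n) d) = (n + 1 - d) * (n + d).choose n := by
  have ballot := card_boundedPartitions_staircase_add_choose hd
  have absorb := Nat.choose_succ_right_eq (n + d) n
  rw [Nat.add_sub_cancel_left] at absorb
  zify [hd.trans n.le_succ] at ballot absorb ⊢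
  linear_combination ((n : ℤ) + 1) * ballot - absorb

end Staircase

open scoped Classical in
/-- Staircase coefficients: if `c_j` is the number of weakly increasing `N`-tuples
`(k₁,…,k_N)` with `k₁ = j`, `k_i ≥ i` for all `i`, and `k_N ≤ N`, then
`N · c_j = j · C(2N-j-1, N-1)`. -/
theorem staircase_coefficients (N : ℕ) (hN : 1 ≤ N) (j : ℕ) (hj1 : 1 ≤ j) (hjN : j ≤ N) :
    N * (Finset.univ.filter
        (fun f : Fin N → Fin (N + 1) => Monotone f ∧ (f ⟨0, hN⟩ : ℕ) = j
          ∧ ∀ i : Fin N, (i : ℕ) + 1 ≤ (f i : ℕ))).card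
      = j * (2 * N - j - 1).choose (N - 1) := by
  obtain ⟨n, rfl⟩ := Nat.exists_eq_add_of_le' hN
  obtain ⟨d, hd⟩ := Nat.exists_eq_add_of_le hjN
  have first_eq : j = n + 1 - d := by omega
  have lower_eq (i : Fin (n + 1)) : (i : ℕ) + 1 = n + 1 - staircase (n + 1) i := by
    simp only [staircase, Fin.val_rev]
    omega
  have card_eq := card_monotone_ge_head_eq (staircase (n + 1)) (by omega : d ≤ n + 1)
  rw [card_boundedPartitions_filter_head_eq (by rw [staircase_succ_zero]; omega) (by omega),
    tail_staircase] at card_eq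
  simp only [← lower_eq, ← first_eq] at card_eq
  rw [show 2 * (n + 1) - j - 1 = n + d by omega, Nat.add_sub_cancel]
  have ballot := succ_mul_card_boundedPartitions_staircase (by omega : d ≤ n)
  rw [← card_eq, ← first_eq] at ballot
  exact ballot
end

section
/- For every integer N ≥ 1: ∑_{j=1}^{N} j · C(2N−j−1, N−1) = N · catalan(N), where C(·,·) denotes the binomial coefficient and catalan(N) = C(2N, N)/(N+1) is the N-th Catalan number. -/
/-!
The sequence `i ↦ C(a + i, a)` has generating function `(1 - x)^(-(a + 1))`, so convolving the
sequences for `a = 1` and `a = k` gives the one for `a = k + 2`. The sum in question is such a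
convolution, with `j = C(1 + (j - 1), 1)` and `k = N - 1`; its value `C(2N, N + 1)` is
`N / (N + 1)` times the central binomial coefficient, that is, `N` times a Catalan number.
-/

open Finset

theorem sum_antidiagonal_choose_add_mul_choose_add (a b n : ℕ) :
    ∑ p ∈ antidiagonal n, (a + p.1).choose a * (b + p.2).choose b =
      (a + b + 1 + n).choose (a + b + 1) := by
  have pow_mul_pow : (PowerSeries.mk 1 : PowerSeries ℤ) ^ (a + 1) * PowerSeries.mk 1 ^ (b + 1) =
      PowerSeries.mk 1 ^ (a + b + 1 + 1) := by
    ring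
  simp only [PowerSeries.mk_one_pow_eq_mk_choose_add] at pow_mul_pow
  have coeff_eq := congrArg (PowerSeries.coeff n) pow_mul_pow
  simp only [PowerSeries.coeff_mul, PowerSeries.coeff_mk] at coeff_eq
  exact_mod_cast coeff_eq

theorem sum_Icc_one_mul_choose (n k : ℕ) :
    ∑ j ∈ Icc 1 n, j * (n + k - j).choose k = (n + k + 1).choose (k + 2) := by
  cases n with
  | zero => simp
  | succ m =>
    calc
      ∑ j ∈ Icc 1 (m + 1), j * (m + 1 + k - j).choose k
        = ∑ i ∈ range (m + 1), (1 + i).choose 1 * (k + (m - i)).choose k := by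
          rw [← Ico_add_one_right_eq_Icc, sum_Ico_eq_sum_range]
          refine sum_congr rfl fun i hi => ?_
          have hi := mem_range.mp hi
          rw [Nat.choose_one_right, show m + 1 + k - (1 + i) = k + (m - i) by lia]
      _ = (1 + k + 1 + m).choose (1 + k + 1) := by
          rw [← Nat.sum_antidiagonal_eq_sum_range_succ
            fun i j => (1 + i).choose 1 * (k + j).choose k,
            sum_antidiagonal_choose_add_mul_choose_add]
      _ = (m + 1 + k + 1).choose (k + 2) := by congr 1 <;> ring

theorem two_mul_choose_succ_eq_mul_catalan (n : ℕ) :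
    (2 * n).choose (n + 1) = n * catalan n := by
  refine Nat.eq_of_mul_eq_mul_right n.succ_pos ?_
  calc
    (2 * n).choose (n + 1) * (n + 1) = n.centralBinom * n := by
      rw [Nat.choose_succ_right_eq, Nat.centralBinom_eq_two_mul_choose, two_mul,
        Nat.add_sub_cancel]
    _ = n * catalan n * (n + 1) := by rw [← succ_mul_catalan_eq_centralBinom]; ring

/-- Catalan sum: `∑_{j=1}^N j · C(2N-j-1, N-1) = N · catalan N`. -/
theorem staircase_catalan_sum (N : ℕ) (hN : 1 ≤ N) :
    ∑ j ∈ Finset.Icc 1 N, j * (2 * N - j - 1).choose (N - 1) = N * catalan N := by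
  calc
    ∑ j ∈ Icc 1 N, j * (2 * N - j - 1).choose (N - 1)
      = ∑ j ∈ Icc 1 N, j * (N + (N - 1) - j).choose (N - 1) := by
        simp only [show ∀ j, 2 * N - j - 1 = N + (N - 1) - j by lia]
    _ = (N + (N - 1) + 1).choose (N - 1 + 2) := sum_Icc_one_mul_choose N (N - 1)
    _ = (2 * N).choose (N + 1) := by congr 1 <;> lia
    _ = N * catalan N := two_mul_choose_succ_eq_mul_catalan N
end

section
/- Let m ≥ 1 be a fixed integer. Then: (i) the function x ↦ (sech x − (sech x)^m/(2 − sech x))/x² is Lebesgue integrable on (0,∞); (ii) the series ∑_{r=0}^{∞} 2^{−r−1}·χ_{m+r} converges and equals ∫_{(0,∞)} (sech x − (sech x)^m/(2 − sech x))/x² dx; and (iii) the normalized partial sums (1/C(2N−m, N−m)) · ∑_{j=m}^{N} C(2N−j−1, N−j)·χ_j converge, as N → ∞, to the same integral, where C(·,·) denotes the binomial coefficient. -/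
/-!
Since `∑ 2 ^ (-r-1) * (s - s ^ (m + r)) = s - s ^ m / (2 - s)` for `s = sech x`, the series identity
is a termwise integration; it is dominated because Bernoulli's inequality gives
`|s - s ^ n| ≤ (n + 1) * (1 - s)`, and `(1 - sech x) / x ^ 2` is integrable.

The weight of `χ_(m+r)` in the normalized sum is the probability that, drawing without replacement
from an urn of `A = 2N - m` balls of which `n = N - m` are black, the first white ball is the
`(r+1)`-st. Since `n / A → 1 / 2`, this law tends to the geometric law `2 ^ (-r-1)`. The probability
`C(n, r) / C(A, r)` of `r` black balls in a row is at most `(n / A) ^ r`, so the weights are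
dominated by a geometric sequence and Tannery's theorem applies.
-/

open MeasureTheory

/-- Hyperbolic secant. -/
noncomputable def sech (x : ℝ) : ℝ := 1 / Real.cosh x

/-- The integral sequence `χ_n = ∫_0^∞ (sech x - sech^n x)/x² dx`. -/
noncomputable def chi (n : ℕ) : ℝ :=
  ∫ x in Set.Ioi (0 : ℝ), (sech x - (sech x) ^ n) / x ^ 2
open Filter

section ChooseRatio

/-- The ratio `C(n, r) / C(A, r)`: the probability that `r` draws without replacement from an urn
of `A` balls, `n` of them black, yield only black balls. It is `0` for `r > n`, also when both
binomials vanish, because of the convention `0 / 0 = 0`. -/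
noncomputable def chooseRatio (A n r : ℕ) : ℝ := (n.choose r : ℝ) / A.choose r

lemma chooseRatio_zero_right (A n : ℕ) : chooseRatio A n 0 = 1 := by
  simp [chooseRatio]

lemma chooseRatio_eq_zero_of_lt (A : ℕ) {n r : ℕ} (hr : n < r) : chooseRatio A n r = 0 := by
  simp [chooseRatio, Nat.choose_eq_zero_of_lt hr]

lemma chooseRatio_nonneg (A n r : ℕ) : 0 ≤ chooseRatio A n r := by
  unfold chooseRatio; positivity

lemma cast_choose_succ_right (n r : ℕ) :
    (n.choose (r + 1) : ℝ) = n.choose r * ((n - r) / (r + 1)) := by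
  rw [← mul_div_assoc, eq_div_iff (by positivity)]
  rcases le_or_gt r n with hr | hr
  · exact_mod_cast Nat.choose_succ_right_eq n r
  · simp [Nat.choose_eq_zero_of_lt hr, Nat.choose_eq_zero_of_lt (hr.trans r.lt_succ_self)]

lemma chooseRatio_succ_right (A n r : ℕ) :
    chooseRatio A n (r + 1) = chooseRatio A n r * ((n - r) / (A - r)) := by
  have hr : (r + 1 : ℝ) ≠ 0 := by positivity
  rw [chooseRatio, chooseRatio, cast_choose_succ_right, cast_choose_succ_right,
    mul_div_mul_comm, div_div_div_cancel_right₀ hr]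

variable {A n : ℕ}

lemma chooseRatio_succ_right_le (hnA : n ≤ A) (r : ℕ) :
    chooseRatio A n (r + 1) ≤ chooseRatio A n r * (n / A) := by
  rcases le_or_gt n r with hr | hr
  · rw [chooseRatio_eq_zero_of_lt A (Nat.lt_succ_of_le hr)]
    exact mul_nonneg (chooseRatio_nonneg A n r) (by positivity)
  · rw [chooseRatio_succ_right]
    have hnA' : (n : ℝ) ≤ A := by exact_mod_cast hnA
    have hr' : (r : ℝ) < n := by exact_mod_cast hr
    refine mul_le_mul_of_nonneg_left ?_ (chooseRatio_nonneg A n r)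
    rw [div_le_div_iff₀ (by linarith) (by linarith)]
    nlinarith

lemma chooseRatio_le_pow (hnA : n ≤ A) (r : ℕ) : chooseRatio A n r ≤ (n / A : ℝ) ^ r := by
  induction r with
  | zero => rw [chooseRatio_zero_right, pow_zero]
  | succ r ih =>
    rw [pow_succ]
    exact (chooseRatio_succ_right_le hnA r).trans
      (mul_le_mul_of_nonneg_right ih (by positivity))

lemma choose_sub_div_choose_eq_chooseRatio (hnA : n ≤ A) {r : ℕ} (hr : r ≤ n) :
    ((A - r).choose (n - r) : ℝ) / A.choose n = chooseRatio A n r := by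
  have hpos {k : ℕ} (hk : k ≤ A) : (A.choose k : ℝ) ≠ 0 :=
    Nat.cast_ne_zero.mpr (Nat.choose_pos hk).ne'
  rw [chooseRatio, div_eq_div_iff (hpos hnA) (hpos (hr.trans hnA)), mul_comm,
    mul_comm (n.choose r : ℝ)]
  exact_mod_cast (Nat.choose_mul hr).symm

lemma choose_sub_one_div_choose_eq_chooseRatio_sub (hnA : n < A) {r : ℕ} (hr : r ≤ n) :
    ((A - r - 1).choose (n - r) : ℝ) / A.choose n =
      chooseRatio A n r - chooseRatio A n (r + 1) := by
  rcases hr.eq_or_lt with rfl | hr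
  · rw [chooseRatio_eq_zero_of_lt A r.lt_succ_self, sub_zero,
      ← choose_sub_div_choose_eq_chooseRatio hnA.le le_rfl, Nat.sub_self, Nat.choose_zero_right,
      Nat.choose_zero_right]
  · have hpascal : ((A - r).choose (n - r) : ℝ) =
        (A - (r + 1)).choose (n - (r + 1)) + (A - r - 1).choose (n - r) := by
      exact_mod_cast Nat.choose_eq_choose_pred_add (n := A - r) (k := n - r) (by omega) (by omega)
    rw [← choose_sub_div_choose_eq_chooseRatio hnA.le hr.le,
      ← choose_sub_div_choose_eq_chooseRatio hnA.le hr, ← sub_div, hpascal, add_sub_cancel_left]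

lemma abs_chooseRatio_sub_succ_le {q : ℝ} (hnA : n ≤ A) (hnq : (n / A : ℝ) ≤ q)
    (hq : q ≤ 1) (r : ℕ) : |chooseRatio A n r - chooseRatio A n (r + 1)| ≤ q ^ r := by
  have hle (k : ℕ) : chooseRatio A n k ≤ q ^ k :=
    (chooseRatio_le_pow hnA k).trans (pow_le_pow_left₀ (by positivity) hnq k)
  have hq0 : 0 ≤ q := le_trans (by positivity) hnq
  exact abs_sub_le_of_nonneg_of_le (chooseRatio_nonneg A n r) (hle r)
    (chooseRatio_nonneg A n (r + 1)) ((hle (r + 1)).trans (pow_le_pow_of_le_one hq0 hq r.le_succ))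

lemma sum_choose_div_choose_smul_eq_tsum {E : Type*} [AddCommMonoid E] [Module ℝ E]
    [TopologicalSpace E] (hnA : n < A) (a : ℕ → E) :
    ∑ r ∈ Finset.range (n + 1), ((A - r - 1).choose (n - r) / A.choose n : ℝ) • a r =
      ∑' r, (chooseRatio A n r - chooseRatio A n (r + 1)) • a r := by
  rw [tsum_eq_sum (s := Finset.range (n + 1))]
  · refine Finset.sum_congr rfl fun r hr => ?_
    rw [choose_sub_one_div_choose_eq_chooseRatio_sub hnA (Finset.mem_range_succ_iff.mp hr)]
  · intro r hr
    have hnr : n < r := by simpa using hr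
    rw [chooseRatio_eq_zero_of_lt A hnr, chooseRatio_eq_zero_of_lt A (hnr.trans r.lt_succ_self),
      sub_zero, zero_smul]

end ChooseRatio

section Toeplitz

variable {ι : Type*} {l : Filter ι} {A n : ι → ℕ} {p : ℝ}

lemma tendsto_chooseRatio (hA : Tendsto A l atTop)
    (hp : Tendsto (fun i => (n i / A i : ℝ)) l (nhds p)) (r : ℕ) :
    Tendsto (fun i => chooseRatio (A i) (n i) r) l (nhds (p ^ r)) := by
  induction r with
  | zero => simp only [chooseRatio_zero_right, pow_zero, tendsto_const_nhds]
  | succ r ih =>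
    have hrA : Tendsto (fun i => (r / A i : ℝ)) l (nhds 0) :=
      (tendsto_const_div_atTop_nhds_zero_nat (r : ℝ)).comp hA
    have hfactor : Tendsto (fun i => ((n i - r) / (A i - r) : ℝ)) l (nhds p) := by
      have hlim := (hp.sub hrA).div (hrA.const_sub 1) (by norm_num)
      rw [sub_zero, sub_zero, div_one] at hlim
      refine hlim.congr' ?_
      filter_upwards [hA.eventually_ne_atTop 0] with i hi
      have hi' : (A i : ℝ) ≠ 0 := Nat.cast_ne_zero.mpr hi
      rw [Pi.div_apply, ← sub_div, one_sub_div hi', div_div_div_cancel_right₀ hi']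
    simp only [chooseRatio_succ_right, pow_succ]
    exact ih.mul hfactor

theorem tendsto_sum_choose_div_choose_smul {E : Type*} [NormedAddCommGroup E] [NormedSpace ℝ E]
    [CompleteSpace E] {q : ℝ} {a : ℕ → E} (hA : Tendsto A l atTop)
    (hp : Tendsto (fun i => (n i / A i : ℝ)) l (nhds p)) (hpq : p < q) (hq : q ≤ 1)
    (ha : Summable fun r => q ^ r * ‖a r‖) :
    Tendsto (fun i => ∑ r ∈ Finset.range (n i + 1),
        ((A i - r - 1).choose (n i - r) / (A i).choose (n i) : ℝ) • a r) l
      (nhds (∑' r, (p ^ r - p ^ (r + 1)) • a r)) := by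
  have hratio : ∀ᶠ i in l, (n i / A i : ℝ) ≤ q ∧ n i < A i := by
    filter_upwards [hp.eventually_lt_const hpq, hA.eventually_gt_atTop 0] with i hi hAi
    refine ⟨hi.le, ?_⟩
    exact_mod_cast (div_lt_one (Nat.cast_pos.mpr hAi)).mp (hi.trans_le hq)
  have htannery : Tendsto (fun i => ∑' r,
        (chooseRatio (A i) (n i) r - chooseRatio (A i) (n i) (r + 1)) • a r) l
      (nhds (∑' r, (p ^ r - p ^ (r + 1)) • a r)) := by
    refine tendsto_tsum_of_dominated_convergence ha (fun r => ?_) ?_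
    · exact ((tendsto_chooseRatio hA hp r).sub (tendsto_chooseRatio hA hp (r + 1))).smul_const _
    · filter_upwards [hratio] with i ⟨hiq, hi⟩ r
      rw [norm_smul, Real.norm_eq_abs]
      exact mul_le_mul_of_nonneg_right (abs_chooseRatio_sub_succ_le hi.le hiq hq r)
        (norm_nonneg _)
  refine htannery.congr' ?_
  filter_upwards [hratio] with i ⟨_, hi⟩
  exact (sum_choose_div_choose_smul_eq_tsum hi a).symm

lemma tendsto_normalized_choose_sum {q : ℝ} {a : ℕ → ℝ} (m : ℕ) (hq : 1 / 2 < q) (hq1 : q ≤ 1)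
    (ha : Summable fun r => q ^ r * ‖a (m + r)‖) :
    Tendsto (fun N : ℕ => (1 / ((2 * N - m).choose (N - m) : ℝ)) *
        ∑ j ∈ Finset.Icc m N, ((2 * N - j - 1).choose (N - j) : ℝ) * a j)
      atTop (nhds (∑' r : ℕ, (1 : ℝ) / 2 ^ (r + 1) * a (m + r))) := by
  have hA : Tendsto (fun N : ℕ => 2 * N - m) atTop atTop :=
    tendsto_atTop_mono' atTop (by filter_upwards [eventually_ge_atTop m] with N hN; omega)
      (tendsto_sub_atTop_nat m)
  have hhalf : Tendsto (fun N : ℕ => ((N - m : ℕ) / (2 * N - m : ℕ) : ℝ)) atTop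
      (nhds (1 / 2)) := by
    refine (tendsto_add_mul_div_add_mul_atTop_nhds (-m : ℝ) (-m) 1 two_ne_zero).congr' ?_
    filter_upwards [eventually_ge_atTop m] with N hN
    rw [Nat.cast_sub hN, Nat.cast_sub (by omega), one_mul, neg_add_eq_sub, neg_add_eq_sub]
    push_cast
    rfl
  have hweight (r : ℕ) : (1 / 2 : ℝ) ^ r - (1 / 2) ^ (r + 1) = 1 / 2 ^ (r + 1) := by
    rw [pow_succ, ← mul_one_sub, one_div_pow, pow_succ]
    ring
  have hlim := tendsto_sum_choose_div_choose_smul hA hhalf hq hq1 ha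
  simp only [hweight, smul_eq_mul] at hlim
  refine hlim.congr' ?_
  filter_upwards [eventually_ge_atTop m] with N hN
  rw [Finset.mul_sum, ← Finset.Ico_add_one_right_eq_Icc, Finset.sum_Ico_eq_sum_range,
    Nat.sub_add_comm hN]
  refine Finset.sum_congr rfl fun r _ => ?_
  rw [Nat.sub_sub _ m r, Nat.sub_sub _ m r, ← mul_assoc, one_div_mul_eq_div]

end Toeplitz

section DominatedSeries

variable {α ι E : Type*} [MeasurableSpace α] {μ : Measure α} [Countable ι]
  [NormedAddCommGroup E] {F : ι → α → E} {f : α → E} {c : ι → ℝ} {g : α → ℝ}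

lemma integrable_of_hasSum_of_norm_le_mul (hF : ∀ i, AEStronglyMeasurable (F i) μ)
    (hc : Summable c) (hg : Integrable g μ) (hFg : ∀ i, ∀ᵐ x ∂μ, ‖F i x‖ ≤ c i * g x)
    (hf : ∀ᵐ x ∂μ, HasSum (fun i => F i x) (f x)) : Integrable f μ := by
  have hf_meas : AEStronglyMeasurable f μ :=
    aestronglyMeasurable_of_tendsto_ae atTop
      (fun s => Finset.aestronglyMeasurable_fun_sum s fun i _ => hF i) hf
  refine (hg.const_mul (∑' i, c i)).mono' hf_meas ?_
  filter_upwards [hf, ae_all_iff.mpr hFg] with x hx hxg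
  exact hx.norm_le_of_bounded (hc.hasSum.mul_right (g x)) hxg

lemma hasSum_integral_of_norm_le_mul [NormedSpace ℝ E] (hF : ∀ i, AEStronglyMeasurable (F i) μ)
    (hc : Summable c) (hg : Integrable g μ) (hFg : ∀ i, ∀ᵐ x ∂μ, ‖F i x‖ ≤ c i * g x)
    (hf : ∀ᵐ x ∂μ, HasSum (fun i => F i x) (f x)) :
    HasSum (fun i => ∫ x, F i x ∂μ) (∫ x, f x ∂μ) := by
  refine hasSum_integral_of_dominated_convergence (fun i x => c i * g x) hF hFg
    (ae_of_all _ fun x => hc.mul_right (g x)) ?_ hf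
  simp only [tsum_mul_right]
  exact hg.const_mul _

end DominatedSeries

lemma summable_geometric_mul_add {q : ℝ} (hq : |q| < 1) (b : ℝ) :
    Summable fun r : ℕ => q ^ r * (b + r) := by
  have hlinear := summable_pow_mul_geometric_of_norm_lt_one 1 (Real.norm_eq_abs q ▸ hq)
  refine (((summable_geometric_of_abs_lt_one hq).mul_right b).add hlinear).congr fun r => ?_
  ring

lemma abs_sub_pow_le {s : ℝ} (hs0 : 0 ≤ s) (hs1 : s ≤ 1) (n : ℕ) :
    |s - s ^ n| ≤ (n + 1) * (1 - s) := by
  have hbernoulli : 1 + n * (s - 1) ≤ s ^ n := one_add_mul_sub_le_pow (by linarith) n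
  have hpow : s ^ n ≤ 1 := pow_le_one₀ hs0 hs1
  rw [abs_le]
  constructor <;> linarith

lemma hasSum_half_pow_mul_sub_pow {s : ℝ} (hs : |s| < 2) (m : ℕ) :
    HasSum (fun r : ℕ => (1 : ℝ) / 2 ^ (r + 1) * (s - s ^ (m + r))) (s - s ^ m / (2 - s)) := by
  have hs' : |s / 2| < 1 := by rw [abs_div, abs_two, div_lt_one two_pos]; exact hs
  have hterm (r : ℕ) : 1 / 2 ^ (r + 1) * (s - s ^ (m + r)) =
      s / 2 / 2 ^ r - s ^ m / 2 * (s / 2) ^ r := by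
    rw [div_pow, pow_succ, pow_add]
    field_simp
  have hgeom : HasSum (fun r : ℕ => s ^ m / 2 * (s / 2) ^ r) (s ^ m / (2 - s)) := by
    have h := (hasSum_geometric_of_abs_lt_one hs').mul_left (s ^ m / 2)
    rwa [one_sub_div two_ne_zero, inv_div, div_mul_div_cancel₀ two_ne_zero] at h
  simp only [hterm]
  exact (hasSum_geometric_two' s).sub hgeom

lemma sech_pos (x : ℝ) : 0 < sech x :=
  one_div_pos.mpr (Real.cosh_pos x)

lemma sech_le_one (x : ℝ) : sech x ≤ 1 :=
  (div_le_one (Real.cosh_pos x)).mpr (Real.one_le_cosh x)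

@[fun_prop]
lemma measurable_sech : Measurable sech :=
  Real.measurable_cosh.const_div 1

lemma one_sub_sech_le (x : ℝ) : 1 - sech x ≤ x ^ 2 / 2 :=
  calc 1 - sech x = 1 - (Real.cosh x)⁻¹ := by rw [sech, one_div]
    _ ≤ Real.log (Real.cosh x) := Real.one_sub_inv_le_log_of_pos (Real.cosh_pos x)
    _ ≤ x ^ 2 / 2 :=
      (Real.log_le_iff_le_exp (Real.cosh_pos x)).mpr (Real.cosh_le_exp_half_sq x)

lemma one_sub_sech_div_sq_le (x : ℝ) : (1 - sech x) / x ^ 2 ≤ 2 * (1 + x ^ 2)⁻¹ := by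
  rcases eq_or_ne x 0 with rfl | hx
  · norm_num
  · rw [← div_eq_mul_inv, div_le_div_iff₀ (by positivity) (by positivity)]
    nlinarith [one_sub_sech_le x, mul_nonneg (sech_pos x).le (sq_nonneg x)]

lemma integrable_one_sub_sech_div_sq : Integrable fun x : ℝ => (1 - sech x) / x ^ 2 := by
  refine (integrable_inv_one_add_sq.const_mul 2).mono'
    (Measurable.aestronglyMeasurable (by fun_prop)) (ae_of_all _ fun x => ?_)
  rw [Real.norm_of_nonneg (div_nonneg (sub_nonneg.mpr (sech_le_one x)) (sq_nonneg x))]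
  exact one_sub_sech_div_sq_le x

lemma norm_sech_sub_pow_div_sq_le (n : ℕ) (x : ℝ) :
    ‖(sech x - sech x ^ n) / x ^ 2‖ ≤ (n + 1) * ((1 - sech x) / x ^ 2) := by
  rw [norm_div, Real.norm_of_nonneg (sq_nonneg x), Real.norm_eq_abs, ← mul_div_assoc]
  exact div_le_div_of_nonneg_right (abs_sub_pow_le (sech_pos x).le (sech_le_one x) n)
    (sq_nonneg x)

lemma norm_chi_le (n : ℕ) :
    ‖chi n‖ ≤ (n + 1) * ∫ x in Set.Ioi (0 : ℝ), (1 - sech x) / x ^ 2 := by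
  rw [chi, ← integral_const_mul]
  exact norm_integral_le_of_norm_le (integrable_one_sub_sech_div_sq.integrableOn.const_mul _)
    (ae_of_all _ (norm_sech_sub_pow_div_sq_le n))

lemma summable_pow_mul_norm_chi {q : ℝ} (hq0 : 0 ≤ q) (hq1 : q < 1) (m : ℕ) :
    Summable fun r : ℕ => q ^ r * ‖chi (m + r)‖ := by
  refine .of_nonneg_of_le (fun r => by positivity) (fun r => ?_)
    ((summable_geometric_mul_add (abs_lt.mpr ⟨by linarith, hq1⟩) (m + 1)).mul_right
      (∫ x in Set.Ioi (0 : ℝ), (1 - sech x) / x ^ 2))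
  calc q ^ r * ‖chi (m + r)‖
      ≤ q ^ r * (((m + r : ℕ) + 1) * ∫ x in Set.Ioi (0 : ℝ), (1 - sech x) / x ^ 2) :=
        mul_le_mul_of_nonneg_left (norm_chi_le (m + r)) (pow_nonneg hq0 r)
    _ = q ^ r * (m + 1 + r) * ∫ x in Set.Ioi (0 : ℝ), (1 - sech x) / x ^ 2 := by
        push_cast
        ring

section Series

variable (m : ℕ)

lemma hasSum_sech_sub_pow_div_sq (x : ℝ) :
    HasSum (fun r : ℕ => (1 : ℝ) / 2 ^ (r + 1) * ((sech x - sech x ^ (m + r)) / x ^ 2))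
      ((sech x - sech x ^ m / (2 - sech x)) / x ^ 2) := by
  have hs : |sech x| < 2 := by
    rw [abs_of_pos (sech_pos x)]
    linarith [sech_le_one x]
  simpa only [mul_div_assoc] using (hasSum_half_pow_mul_sub_pow hs m).div_const (x ^ 2)

lemma norm_half_pow_mul_sech_sub_pow_le (r : ℕ) (x : ℝ) :
    ‖(1 : ℝ) / 2 ^ (r + 1) * ((sech x - sech x ^ (m + r)) / x ^ 2)‖ ≤
      1 / 2 ^ (r + 1) * (m + r + 1) * ((1 - sech x) / x ^ 2) := by
  rw [norm_mul, Real.norm_of_nonneg (by positivity), mul_assoc]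
  refine mul_le_mul_of_nonneg_left ?_ (by positivity)
  exact_mod_cast norm_sech_sub_pow_div_sq_le (m + r) x

lemma summable_half_pow_mul_add :
    Summable fun r : ℕ => (1 : ℝ) / 2 ^ (r + 1) * (m + r + 1) := by
  refine ((summable_geometric_mul_add (q := 1 / 2) (by norm_num [abs_of_pos])
    (m + 1)).mul_left (1 / 2)).congr fun r => ?_
  rw [one_div_pow, pow_succ]
  ring

lemma measurable_half_pow_mul_sech_sub_pow (r : ℕ) :
    Measurable fun x : ℝ => (1 : ℝ) / 2 ^ (r + 1) * ((sech x - sech x ^ (m + r)) / x ^ 2) := by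
  fun_prop

lemma integrable_sech_sub_pow_div_two_sub_sech :
    Integrable fun x : ℝ => (sech x - sech x ^ m / (2 - sech x)) / x ^ 2 :=
  integrable_of_hasSum_of_norm_le_mul
    (fun r => (measurable_half_pow_mul_sech_sub_pow m r).aestronglyMeasurable)
    (summable_half_pow_mul_add m) integrable_one_sub_sech_div_sq
    (fun r => ae_of_all _ (norm_half_pow_mul_sech_sub_pow_le m r))
    (ae_of_all _ (hasSum_sech_sub_pow_div_sq m))

lemma hasSum_half_pow_mul_chi :
    HasSum (fun r : ℕ => (1 : ℝ) / 2 ^ (r + 1) * chi (m + r))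
      (∫ x in Set.Ioi (0 : ℝ), (sech x - sech x ^ m / (2 - sech x)) / x ^ 2) := by
  simp only [chi, ← integral_const_mul]
  exact hasSum_integral_of_norm_le_mul
    (fun r => (measurable_half_pow_mul_sech_sub_pow m r).aestronglyMeasurable)
    (summable_half_pow_mul_add m) integrable_one_sub_sech_div_sq.integrableOn
    (fun r => ae_of_all _ (norm_half_pow_mul_sech_sub_pow_le m r))
    (ae_of_all _ (hasSum_sech_sub_pow_div_sq m))

end Series

/-- Normalized limiting identity for the common-lower-bound family. -/
theorem common_normalized_limit (m : ℕ) (hm : 1 ≤ m) :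
    IntegrableOn (fun x : ℝ =>
        (sech x - (sech x) ^ m / (2 - sech x)) / x ^ 2) (Set.Ioi 0)
    ∧ HasSum (fun r : ℕ => (1 : ℝ) / 2 ^ (r + 1) * chi (m + r))
        (∫ x in Set.Ioi (0 : ℝ), (sech x - (sech x) ^ m / (2 - sech x)) / x ^ 2)
    ∧ Tendsto (fun N : ℕ =>
        (1 / ((2 * N - m).choose (N - m) : ℝ)) *
          ∑ j ∈ Finset.Icc m N, ((2 * N - j - 1).choose (N - j) : ℝ) * chi j)
      atTop
      (nhds (∫ x in Set.Ioi (0 : ℝ), (sech x - (sech x) ^ m / (2 - sech x)) / x ^ 2)) := by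
  have hseries := hasSum_half_pow_mul_chi m
  refine ⟨(integrable_sech_sub_pow_div_two_sub_sech m).integrableOn, hseries, ?_⟩
  rw [← hseries.tsum_eq]
  exact tendsto_normalized_choose_sum (q := 3 / 4) m (by norm_num) (by norm_num)
    (summable_pow_mul_norm_chi (by norm_num) (by norm_num) m)
end
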